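/- Let d ≥ 3 and let N₀ > (d+2)/(d−2) be an odd integer. Let Ω ⊂ ℝ^d be a star-shaped domain containing the origin with C¹ boundary. Suppose u ∈ C²(closure of Ω) is a classical solution of −Δu = ∑_{N ≥ N₀, N odd} u^N / N! in Ω with u = 0 on ∂Ω. Then u ≡ 0 on the closure of Ω. -/

import Mathlib

open MeasureTheory Set Filter
open scoped ENNReal NNReal Topology BigOperators

noncomputable section

/-- Euclidean space ℝ^d. -/
abbrev Euc (d : ℕ) := EuclideanSpace ℝ (Fin d)

/-- Smooth compactly supported test functions supported inside Ω. -/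
def IsTestFun {d : ℕ} (Ω : Set (Euc d)) (φ : Euc d → ℂ) : Prop :=
  ContDiff ℝ (⊤ : ℕ∞) φ ∧ HasCompactSupport φ ∧ tsupport φ ⊆ Ω

/-- The i-th partial derivative of a (differentiable) function. -/
def pd {d : ℕ} (i : Fin d) (φ : Euc d → ℂ) (x : Euc d) : ℂ :=
  fderiv ℝ φ x (EuclideanSpace.single i (1 : ℝ))

/-- `v` is the i-th weak partial derivative of `u` on Ω. -/
def IsWeakDeriv {d : ℕ} (Ω : Set (Euc d)) (i : Fin d) (u v : Euc d → ℂ) : Prop :=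
  ∀ φ : Euc d → ℂ, IsTestFun Ω φ →
    ∫ x in Ω, u x * pd i φ x = - ∫ x in Ω, v x * φ x

/-- Membership in L²(Ω). -/
def MemL2 {d : ℕ} (Ω : Set (Euc d)) (u : Euc d → ℂ) : Prop :=
  MemLp u 2 (volume.restrict Ω)

/-- The L²(Ω) norm. -/
def L2N {d : ℕ} (Ω : Set (Euc d)) (u : Euc d → ℂ) : ℝ :=
  (eLpNorm u 2 (volume.restrict Ω)).toReal

/-- The L^∞(Ω) norm. -/
def LinfN {d : ℕ} (Ω : Set (Euc d)) (u : Euc d → ℂ) : ℝ :=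
  (eLpNorm u ⊤ (volume.restrict Ω)).toReal

/-- A bundled Sobolev function of integer order k on Ω : the function together with
all of its iterated weak partial derivatives up to order k, all belonging to L²(Ω).
`D j v` is the iterated weak derivative ∂_{v 0} ∂_{v 1} ⋯ ∂_{v (j-1)} u. -/
structure SobFun (d : ℕ) (Ω : Set (Euc d)) (k : ℕ) where
  D : (j : ℕ) → (Fin j → Fin d) → Euc d → ℂ
  mem : ∀ j, j ≤ k → ∀ v : Fin j → Fin d, MemL2 Ω (D j v)
  weak : ∀ j, j < k → ∀ v : Fin j → Fin d, ∀ i : Fin d,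
    IsWeakDeriv Ω i (D j v) (D (j+1) (Fin.cons i v))

/-- The underlying function of a bundled Sobolev function. -/
def SobFun.u {d : ℕ} {Ω : Set (Euc d)} {k : ℕ} (U : SobFun d Ω k) : Euc d → ℂ :=
  U.D 0 (fun i => i.elim0)

/-- First-order weak partial derivatives of a bundled Sobolev function. -/
def SobFun.d1 {d : ℕ} {Ω : Set (Euc d)} {k : ℕ} (U : SobFun d Ω k) (i : Fin d) :
    Euc d → ℂ :=
  U.D 1 (fun _ => i)

/-- Forgetting the top-order derivatives of a bundled Sobolev function. -/
def SobFun.lower {d : ℕ} {Ω : Set (Euc d)} {k : ℕ} (U : SobFun d Ω (k+1)) :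
    SobFun d Ω k :=
  ⟨U.D, fun j hj v => U.mem j (Nat.le_succ_of_le hj) v,
    fun j hj v i => U.weak j (Nat.lt_succ_of_lt hj) v i⟩

/-- Squared Gagliardo seminorm, as an extended nonnegative real. -/
def gagliardoE {d : ℕ} (Ω : Set (Euc d)) (s' : ℝ) (v : Euc d → ℂ) : ℝ≥0∞ :=
  ∫⁻ x in Ω, ∫⁻ y in Ω,
    ((‖v x - v y‖₊ : ℝ≥0∞) ^ (2 : ℕ)) / ((‖x - y‖₊ : ℝ≥0∞) ^ ((d : ℝ) + 2 * s'))

/-- Gagliardo seminorm with differentiability parameter s' ∈ (0,1). -/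
def gagliardo {d : ℕ} (Ω : Set (Euc d)) (s' : ℝ) (v : Euc d → ℂ) : ℝ :=
  ((gagliardoE Ω s' v) ^ ((1 : ℝ)/2)).toReal

/-- Integer-order Sobolev norm ‖·‖_{H^k(Ω)}. -/
def SobNormInt {d : ℕ} {Ω : Set (Euc d)} {k : ℕ} (U : SobFun d Ω k) : ℝ :=
  Real.sqrt (∑ j ∈ Finset.range (k+1), ∑ v : Fin j → Fin d, (L2N Ω (U.D j v))^2)

/-- Sobolev norm ‖·‖_{H^s(Ω)} for k ≤ s < k+1 : the integer part plus, when s > k,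
the Gagliardo seminorms of the top-order derivatives. -/
def SobNormS {d : ℕ} {Ω : Set (Euc d)} {k : ℕ} (s : ℝ) (U : SobFun d Ω k) : ℝ :=
  Real.sqrt ((∑ j ∈ Finset.range (k+1), ∑ v : Fin j → Fin d, (L2N Ω (U.D j v))^2)
    + if (k : ℝ) < s then
        ∑ v : Fin k → Fin d, (gagliardo Ω (s - k) (U.D k v))^2
      else 0)

/-- Finiteness of the fractional part of the H^s norm (membership in H^s). -/
def SobFinS {d : ℕ} {Ω : Set (Euc d)} {k : ℕ} (s : ℝ) (U : SobFun d Ω k) : Prop :=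
  (k : ℝ) < s → ∀ v : Fin k → Fin d, gagliardoE Ω (s - k) (U.D k v) < ⊤

/-- H^s distance between two bundled Sobolev functions, k ≤ s < k+1. -/
def SobDistS {d : ℕ} {Ω : Set (Euc d)} {k : ℕ} (s : ℝ) (U V : SobFun d Ω k) : ℝ :=
  Real.sqrt ((∑ j ∈ Finset.range (k+1), ∑ v : Fin j → Fin d,
      (L2N Ω (fun x => U.D j v x - V.D j v x))^2)
    + if (k : ℝ) < s then
        ∑ v : Fin k → Fin d, (gagliardo Ω (s - k) (fun x => U.D k v x - V.D k v x))^2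
      else 0)

/-- Membership in H¹₀(Ω) : the extension by zero belongs to H¹(ℝ^d). -/
def MemH10 {d : ℕ} (Ω : Set (Euc d)) (u : Euc d → ℂ) : Prop :=
  MemL2 univ (Ω.indicator u) ∧
  ∀ i : Fin d, ∃ v : Euc d → ℂ, MemL2 univ v ∧ IsWeakDeriv univ i (Ω.indicator u) v

/-- The principal Dirichlet eigenvalue of -Δ on Ω, via the Rayleigh variational
characterization (infimum over smooth compactly supported test functions). -/
def lambda1 {d : ℕ} (Ω : Set (Euc d)) : ℝ :=
  sInf { r : ℝ | ∃ φ : Euc d → ℂ, IsTestFun Ω φ ∧ φ ≠ 0 ∧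
    r = (∫ x, ‖fderiv ℝ φ x‖^2) / (∫ x, ‖φ x‖^2) }

/-- Ω has a smooth boundary: it is a sublevel set of a smooth function whose
gradient does not vanish on the boundary. -/
def HasSmoothBoundary {d : ℕ} (Ω : Set (Euc d)) : Prop :=
  ∃ f : Euc d → ℝ, ContDiff ℝ (⊤ : ℕ∞) f ∧ Ω = {x | f x < 0} ∧
    ∀ x ∈ frontier Ω, fderiv ℝ f x ≠ 0

/-- Uniform ellipticity: Re ∑ ε^{ij}(x) ξ_i conj(ξ_j) ≥ θ |ξ|² for a.e. x ∈ Ω. -/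
def UniformlyElliptic {d : ℕ} (Ω : Set (Euc d))
    (ε : Euc d → Matrix (Fin d) (Fin d) ℂ) (θ : ℝ) : Prop :=
  ∀ᵐ x ∂(volume.restrict Ω), ∀ ξ : Fin d → ℂ,
    θ * ∑ i, ‖ξ i‖^2 ≤ (∑ i, ∑ j, ε x i j * ξ i * (starRingEnd ℂ) (ξ j)).re

/-- ε ∈ W^{1,∞}(Ω; ℂ^{d×d}) : every entry is bounded and Lipschitz on Ω. -/
def EpsW1inf {d : ℕ} (Ω : Set (Euc d)) (ε : Euc d → Matrix (Fin d) (Fin d) ℂ) : Prop :=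
  ∃ K : ℝ≥0, ∀ i j, LipschitzOnWith K (fun x => ε x i j) Ω ∧ ∀ x ∈ Ω, ‖ε x i j‖ ≤ (K : ℝ)

/-- `Lu` is a representative of  L u = -∇·(ε ∇u) + κ² u  for the H²-function U:
there are weak divergence data g i = ∂_i (∑_j ε^{ij} ∂_j u)  with
Lu = -∑ g i + κ² u  a.e. on Ω. -/
def IsLu {d : ℕ} (Ω : Set (Euc d)) (ε : Euc d → Matrix (Fin d) (Fin d) ℂ)
    (κ2 : Euc d → ℂ) (U : SobFun d Ω 2) (Lu : Euc d → ℂ) : Prop :=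
  ∃ g : Fin d → Euc d → ℂ,
    (∀ i, IsWeakDeriv Ω i (fun x => ∑ j, ε x i j * U.d1 j x) (g i)) ∧
    ∀ᵐ x ∂(volume.restrict Ω), Lu x = -(∑ i, g i x) + κ2 x * U.u x

/-- U ∈ H²(Ω) is a strong solution of the nPBE
  -∇·(ε ∇u) + κ² sinh u = f in Ω,  u = g on ∂Ω,
where the boundary datum is represented by a lift w (u - w ∈ H¹₀(Ω)). -/
def IsStrongSolNPBE {d : ℕ} (Ω : Set (Euc d)) (ε : Euc d → Matrix (Fin d) (Fin d) ℂ)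
    (κ2 : Euc d → ℂ) (f w : Euc d → ℂ) (U : SobFun d Ω 2) : Prop :=
  (∃ g : Fin d → Euc d → ℂ,
    (∀ i, IsWeakDeriv Ω i (fun x => ∑ j, ε x i j * U.d1 j x) (g i)) ∧
    ∀ᵐ x ∂(volume.restrict Ω),
      -(∑ i, g i x) + κ2 x * Complex.sinh (U.u x) = f x) ∧
  MemH10 Ω (fun x => U.u x - w x)

/-- U ∈ H¹(Ω) is a weak solution of the linear PBE L u = f with boundary lift w. -/
def IsWeakSolLinPBE {d : ℕ} (Ω : Set (Euc d)) (ε : Euc d → Matrix (Fin d) (Fin d) ℂ)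
    (κ2 : Euc d → ℂ) (f w : Euc d → ℂ) (U : SobFun d Ω 1) : Prop :=
  MemH10 Ω (fun x => U.u x - w x) ∧
  ∀ Φ : SobFun d Ω 1, MemH10 Ω Φ.u →
    (∫ x in Ω, ((∑ i, ∑ j, ε x i j * U.d1 j x * (starRingEnd ℂ) (Φ.d1 i x))
        + κ2 x * U.u x * (starRingEnd ℂ) (Φ.u x)))
      = ∫ x in Ω, f x * (starRingEnd ℂ) (Φ.u x)

/-- Taylor coefficients n_k of sinh z - z : 1/k! for odd k, 0 for even k. -/
def nk (k : ℕ) : ℝ := if Odd k then 1 / (Nat.factorial k) else 0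

/-- Ω has a C¹ boundary: it is a sublevel set of a C¹ function whose gradient does not
vanish on the boundary. -/
def HasC1Boundary {d : ℕ} (Ω : Set (Euc d)) : Prop :=
  ∃ f : Euc d → ℝ, ContDiff ℝ 1 f ∧ Ω = {x | f x < 0} ∧
    ∀ x ∈ frontier Ω, fderiv ℝ f x ≠ 0

lemma int_fderiv_zero {d : ℕ} (P : Euc d → ℝ) (hP : ContDiff ℝ 1 P) (hc : HasCompactSupport P)
    (v : Euc d) : ∫ x, fderiv ℝ P x v = 0 := by
  have h1 : Integrable (fun x => fderiv ℝ P x v) := by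
    have hcont : Continuous (fun x => fderiv ℝ P x v) :=
      (hP.continuous_fderiv (by norm_num)).clm_apply continuous_const
    exact hcont.integrable_of_hasCompactSupport (hc.fderiv_apply (𝕜 := ℝ) v)
  have h2 := integral_mul_fderiv_eq_neg_fderiv_mul_of_integrable (μ := (volume : Measure (Euc d)))
    (f := P) (g := fun _ => (1:ℝ)) (v := v) (by simpa using h1) (by simp)
    (by simpa using hP.continuous.integrable_of_hasCompactSupport hc)
    (fun x _ => hP.differentiable (by norm_num) x) (fun x _ => by fun_prop)
  simpa using h2

lemma frontier_zero {d : ℕ} {Ω : Set (Euc d)} {f : Euc d → ℝ} (hf : Continuous f)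
    (hΩ : Ω = {x | f x < 0}) {x : Euc d} (hx : x ∈ frontier Ω) : f x = 0 := by
  rw [hΩ] at hx
  exact frontier_lt_subset_eq hf continuous_const hx

lemma div_nonneg_aux {d : ℕ} {Ω : Set (Euc d)} (hΩb : Bornology.IsBounded Ω) {f : Euc d → ℝ}
    (hf : ContDiff ℝ 1 f) (hΩ : Ω = {x | f x < 0}) (W : Fin d → Euc d → ℝ)
    (hWc : ∀ i, ContinuousOn (W i) (closure Ω)) (hWd : ∀ i, ContDiffOn ℝ 1 (W i) Ω)
    (hb : ∀ x ∈ frontier Ω, 0 < ∑ i, W i x * fderiv ℝ f x (EuclideanSpace.single i (1:ℝ)))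
    (D : Euc d → ℝ)
    (hD : ∀ x ∈ Ω, ∑ i, fderiv ℝ (W i) x (EuclideanSpace.single i (1:ℝ)) = D x)
    (hint : IntegrableOn D Ω) : 0 ≤ ∫ x in Ω, D x := by
  have hfc : Continuous f := hf.continuous
  have hΩo : IsOpen Ω := by rw [hΩ]; exact isOpen_lt hfc continuous_const
  have hcomp : IsCompact (closure Ω) := hΩb.isCompact_closure
  have hf' : Continuous (fderiv ℝ f) := hf.continuous_fderiv (by norm_num)
  set B : Euc d → ℝ := fun x => ∑ i, W i x * fderiv ℝ f x (EuclideanSpace.single i (1:ℝ)) with hB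
  have hBc : ContinuousOn B (closure Ω) := by
    refine continuousOn_finsetSum _ fun i _ => (hWc i).mul ?_
    exact (hf'.clm_apply continuous_const).continuousOn
  -- near the boundary B > 0
  obtain ⟨ε, hε, hBpos⟩ : ∃ ε > 0, ∀ x ∈ Ω, -ε < f x → 0 ≤ B x := by
    set K := closure Ω ∩ B ⁻¹' (Iic 0) with hK
    have hKc : IsCompact K :=
      hcomp.of_isClosed_subset (hBc.preimage_isClosed_of_isClosed isClosed_closure isClosed_Iic)
        inter_subset_left
    have hKΩ : K ⊆ Ω := by
      rintro x ⟨hx, hx2⟩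
      by_contra hn
      have : x ∈ frontier Ω := by rw [hΩo.frontier_eq]; exact ⟨hx, hn⟩
      exact absurd (hb x this) (not_lt.2 hx2)
    rcases K.eq_empty_or_nonempty with hE | hE
    · refine ⟨1, one_pos, fun x hx _ => ?_⟩
      by_contra hn
      have : x ∈ K := ⟨subset_closure hx, (not_le.1 hn).le⟩
      rw [hE] at this; exact this
    · obtain ⟨x0, hx0, hmax⟩ := hKc.exists_isMaxOn hE hfc.continuousOn
      have h1 : f x0 < 0 := by have := hKΩ hx0; rwa [hΩ] at this
      refine ⟨-f x0, by linarith, fun x hx h2 => ?_⟩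
      by_contra hn
      have : x ∈ K := ⟨subset_closure hx, (not_le.1 hn).le⟩
      have := hmax this
      simp only [mem_ofPred_eq] at this
      linarith
  set χ := Real.smoothTransition with hχ
  have hχd : ContDiff ℝ 1 χ := by
    have := Real.smoothTransition.contDiff (n := 1)
    exact_mod_cast this
  set η : ℕ → Euc d → ℝ := fun n x => χ (-(n * f x) - 1) with hη
  have hηd : ∀ n, ContDiff ℝ 1 (η n) := fun n =>
    hχd.comp (((contDiff_const.mul hf).neg).sub contDiff_const)
  have hη0 : ∀ (n : ℕ) x, -1 < n * f x → η n =ᶠ[𝓝 x] 0 := by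
    intro n x hx
    have : ∀ᶠ y in 𝓝 x, -1 < n * f y :=
      (continuous_const.mul hfc).continuousAt.eventually_const_lt hx
    filter_upwards [this] with y hy
    exact Real.smoothTransition.zero_of_nonpos (by linarith)
  have hηderiv : ∀ n x, HasFDerivAt (η n) ((-(n * deriv χ (-(n * f x) - 1))) • fderiv ℝ f x) x := by
    intro n x
    have h1 : HasDerivAt χ (deriv χ (-(n * f x) - 1)) (-(n * f x) - 1) :=
      (hχd.differentiable (by norm_num) _).hasDerivAt
    have h2 : HasFDerivAt f (fderiv ℝ f x) x := (hf.differentiable (by norm_num) x).hasFDerivAt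
    have h3 := h1.comp_hasFDerivAt x (((h2.const_mul (n:ℝ)).neg).sub_const 1)
    have h4 : (-(n * deriv χ (-(n * f x) - 1))) • fderiv ℝ f x
        = deriv χ (-(n * f x) - 1) • -((n:ℝ) • fderiv ℝ f x) := by
      rw [smul_neg, smul_smul, neg_smul, mul_comm]
    rw [h4]
    exact h3
  have hPsupp : ∀ n i, ∀ x ∉ Ω, (fun y => η n y * W i y) =ᶠ[𝓝 x] 0 := by
    intro n i x hx
    have : 0 ≤ f x := by rw [hΩ] at hx; simpa using hx
    filter_upwards [hη0 n x (by have : 0 ≤ n * f x := by positivity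
                                linarith)] with y hy
    simp [hy]
  have hP : ∀ n i, ContDiff ℝ 1 (fun y => η n y * W i y) := by
    intro n i
    rw [contDiff_iff_contDiffAt]
    intro x
    by_cases hx : x ∈ Ω
    · exact (hηd n).contDiffAt.mul ((hWd i).contDiffAt (hΩo.mem_nhds hx))
    · exact contDiffAt_const.congr_of_eventuallyEq (hPsupp n i x hx)
  have hPc : ∀ n i, HasCompactSupport (fun y => η n y * W i y) := by
    intro n i
    refine hcomp.of_isClosed_subset (isClosed_tsupport _) ?_
    intro x hx
    by_contra hn
    have : x ∉ Ω := fun h => hn (subset_closure h)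
    exact (notMem_tsupport_iff_eventuallyEq.2 (hPsupp n i x this)) hx
  have hpt : ∀ n x, ∑ i, fderiv ℝ (fun y => η n y * W i y) x (EuclideanSpace.single i (1:ℝ))
      = Ω.indicator (fun x => η n x * D x - n * deriv χ (-(n * f x) - 1) * B x) x := by
    intro n x
    by_cases hx : x ∈ Ω
    · rw [indicator_of_mem hx]
      have : ∀ i, fderiv ℝ (fun y => η n y * W i y) x (EuclideanSpace.single i (1:ℝ))
          = η n x * fderiv ℝ (W i) x (EuclideanSpace.single i (1:ℝ))
            - n * deriv χ (-(n * f x) - 1) * (W i x * fderiv ℝ f x (EuclideanSpace.single i (1:ℝ))) := by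
        intro i
        have h1 : HasFDerivAt (W i) (fderiv ℝ (W i) x) x :=
          (((hWd i).contDiffAt (hΩo.mem_nhds hx)).differentiableAt (by norm_num)).hasFDerivAt
        rw [show (fun y => η n y * W i y) = η n * W i from rfl, ((hηderiv n x).mul h1).fderiv]
        simp
        ring
      rw [Finset.sum_congr rfl fun i _ => this i, Finset.sum_sub_distrib, ← Finset.mul_sum,
        ← Finset.mul_sum, hD x hx]
    · rw [indicator_of_notMem hx]
      refine Finset.sum_eq_zero fun i _ => ?_
      rw [(hPsupp n i x hx).fderiv_eq]
      simp
  have hPint : ∀ n i, Integrable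
      (fun x => fderiv ℝ (fun y => η n y * W i y) x (EuclideanSpace.single i (1:ℝ))) := by
    intro n i
    have hcont : Continuous
        (fun x => fderiv ℝ (fun y => η n y * W i y) x (EuclideanSpace.single i (1:ℝ))) :=
      ((hP n i).continuous_fderiv (by norm_num)).clm_apply continuous_const
    exact hcont.integrable_of_hasCompactSupport ((hPc n i).fderiv_apply (𝕜 := ℝ) _)
  have hTint : ∀ n : ℕ, IntegrableOn
      (fun x => η n x * D x - n * deriv χ (-(n * f x) - 1) * B x) Ω := by
    intro n
    rw [← integrable_indicator_iff hΩo.measurableSet, ← funext (hpt n)]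
    exact integrable_finsetSum _ fun i _ => hPint n i
  have hI : ∀ n : ℕ, ∫ x in Ω, (η n x * D x - n * deriv χ (-(n * f x) - 1) * B x) = 0 := by
    intro n
    rw [← integral_indicator hΩo.measurableSet]
    rw [← funext (hpt n), integral_finsetSum]
    · exact Finset.sum_eq_zero fun i _ => int_fderiv_zero _ (hP n i) (hPc n i) _
    · exact fun i _ => hPint n i
  have hηD : ∀ n, IntegrableOn (fun x => η n x * D x) Ω := by
    intro n
    refine hint.bdd_mul (c := 1) (hηd n).continuous.aestronglyMeasurable ?_
    refine ae_of_all _ fun x => ?_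
    rw [Real.norm_eq_abs, abs_le]
    exact ⟨by linarith [Real.smoothTransition.nonneg (-(n * f x) - 1)], Real.smoothTransition.le_one _⟩
  have hpos : ∀ᶠ n : ℕ in atTop, 0 ≤ ∫ x in Ω, η n x * D x := by
    have : ∀ᶠ n : ℕ in atTop, 2 / ε < n := tendsto_natCast_atTop_atTop.eventually_gt_atTop _
    filter_upwards [this] with n hn
    rw [← hI n]
    have hn0 : (0:ℝ) < n := lt_trans (by positivity) hn
    refine setIntegral_mono_on (hTint n) (hηD n) hΩo.measurableSet fun x hx => ?_
    suffices 0 ≤ n * deriv χ (-(n * f x) - 1) * B x by linarith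
    by_cases hc : -ε < f x
    · exact mul_nonneg (mul_nonneg hn0.le (Real.smoothTransition.monotone.deriv_nonneg)) (hBpos x hx hc)
    · have : χ =ᶠ[𝓝 (-(n * f x) - 1)] fun _ => 1 := by
        have h1 : 1 < -(n * f x) - 1 := by
          rw [div_lt_iff₀ hε] at hn
          nlinarith
        filter_upwards [lt_mem_nhds h1] with y hy
        exact Real.smoothTransition.one_of_one_le hy.le
      rw [this.deriv_eq]
      simp
  have hlim : Tendsto (fun n : ℕ => ∫ x in Ω, η n x * D x) atTop (𝓝 (∫ x in Ω, D x)) := by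
    refine tendsto_integral_of_dominated_convergence (fun x => ‖D x‖) (fun n => (hηD n).1) hint.norm
      ?_ ?_
    · intro n
      refine ae_of_all _ fun x => ?_
      rw [norm_mul]
      refine mul_le_of_le_one_left (norm_nonneg _) ?_
      rw [Real.norm_eq_abs, abs_le]
      exact ⟨by linarith [Real.smoothTransition.nonneg (-(n * f x) - 1)], Real.smoothTransition.le_one _⟩
    · refine (ae_restrict_iff' hΩo.measurableSet).2 (ae_of_all _ fun x hx => ?_)
      have hx0 : f x < 0 := by rwa [hΩ] at hx
      refine tendsto_const_nhds.congr' ?_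
      have : ∀ᶠ n : ℕ in atTop, 2 / (-f x) < n := tendsto_natCast_atTop_atTop.eventually_gt_atTop _
      filter_upwards [this] with n hn
      have : η n x = 1 := by
        refine Real.smoothTransition.one_of_one_le ?_
        rw [div_lt_iff₀ (by linarith)] at hn
        linarith
      rw [this, one_mul]
  exact ge_of_tendsto hlim hpos

lemma line_neg {d : ℕ} {f : Euc d → ℝ} {x v : Euc d} {f' : Euc d →L[ℝ] ℝ}
    (hf : HasFDerivAt f f' x) (h0 : f x = 0) (hv : f' v < 0) :
    ∀ᶠ t : ℝ in 𝓝[>] 0, f (x + t • v) < 0 := by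
  have h1 := (hf.hasLineDerivAt v)
  rw [HasLineDerivAt, hasDerivAt_iff_tendsto_slope] at h1
  have h2 := h1.eventually_lt_const hv
  have h3 : ∀ᶠ t : ℝ in 𝓝[>] 0, slope (fun t : ℝ => f (x + t • v)) 0 t < 0 :=
    h2.filter_mono (nhdsWithin_mono _ (fun t (ht : 0 < t) => ht.ne'))
  filter_upwards [h3, self_mem_nhdsWithin] with t ht ht0
  rw [slope_def_field] at ht
  simp only [zero_smul, add_zero, h0, sub_zero] at ht
  have ht0 : 0 < t := ht0
  by_contra hn
  exact absurd ht (not_lt.2 (div_nonneg (not_lt.1 hn) ht0.le))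

lemma uniqueDiff_closure {d : ℕ} {Ω : Set (Euc d)} {f : Euc d → ℝ}
    (hf : ContDiff ℝ 1 f) (hΩ : Ω = {x | f x < 0})
    (hf0 : ∀ x ∈ frontier Ω, fderiv ℝ f x ≠ 0) : UniqueDiffOn ℝ (closure Ω) := by
  have hΩo : IsOpen Ω := by rw [hΩ]; exact isOpen_lt hf.continuous continuous_const
  intro x hx
  by_cases hxΩ : x ∈ Ω
  · exact (hΩo.uniqueDiffWithinAt hxΩ).mono subset_closure
  have hxf : x ∈ frontier Ω := by rw [hΩo.frontier_eq]; exact ⟨hx, hxΩ⟩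
  have hfx : f x = 0 := by
    rw [hΩ] at hxf; exact frontier_lt_subset_eq hf.continuous continuous_const hxf
  have hd := (hf.differentiable (by norm_num) x).hasFDerivAt
  refine ⟨?_, subset_closure hx⟩
  have hsub : {v | fderiv ℝ f x v < 0} ⊆ tangentConeAt ℝ (closure Ω) x := by
    intro v hv
    refine mem_tangentConeAt_of_add_smul_mem (l := 𝓝[>] (0:ℝ)) (c := id) ?_ ?_
    · exact nhdsWithin_mono _ (fun t (ht : 0 < t) => ht.ne')
    · filter_upwards [line_neg hd hfx hv] with t ht
      exact subset_closure (by rw [hΩ]; exact ht)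
  have htop : Submodule.span ℝ (tangentConeAt ℝ (closure Ω) x) = ⊤ := by
    apply Submodule.eq_top_of_nonempty_interior'
    obtain ⟨v, hv⟩ : ∃ v, fderiv ℝ f x v ≠ 0 := by
      by_contra hn
      push Not at hn
      exact hf0 x hxf (ContinuousLinearMap.ext hn)
    have hopen : IsOpen {v | fderiv ℝ f x v < 0} :=
      isOpen_lt (fderiv ℝ f x).continuous continuous_const
    have hne : ∃ w, fderiv ℝ f x w < 0 := by
      rcases lt_or_gt_of_ne hv with h | h
      · exact ⟨v, h⟩
      · exact ⟨-v, by simpa using h⟩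
    obtain ⟨w, hw⟩ := hne
    exact ⟨w, interior_maximal (hsub.trans Submodule.subset_span) hopen hw⟩
  rw [htop]
  exact dense_univ

lemma star_nonneg {d : ℕ} {Ω : Set (Euc d)} {f : Euc d → ℝ}
    (hf : ContDiff ℝ 1 f) (hΩ : Ω = {x | f x < 0}) (hstar : StarConvex ℝ (0 : Euc d) Ω)
    {x : Euc d} (hx : x ∈ frontier Ω) : 0 ≤ fderiv ℝ f x x := by
  have hfx : f x = 0 := by
    rw [hΩ] at hx; exact frontier_lt_subset_eq hf.continuous continuous_const hx
  by_contra hn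
  push Not at hn
  have hd := (hf.differentiable (by norm_num) x).hasFDerivAt
  have h1 := line_neg (f := fun y => - f y) (v := -x) hd.neg (by simpa using hfx) (by simpa using hn)
  have h2 : ∀ᶠ t : ℝ in 𝓝[>] 0, t < 1 := nhdsWithin_le_nhds (gt_mem_nhds one_pos)
  obtain ⟨t, ht, ht1, ht0⟩ := (h1.and (h2.and self_mem_nhdsWithin)).exists
  have ht0 : 0 < t := ht0
  have hcl : ∀ y ∈ closure Ω, f y ≤ 0 := by
    intro y hy
    rw [hΩ] at hy
    exact closure_lt_subset_le hf.continuous continuous_const hy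
  have hmem : x + t • -x ∈ closure Ω := by
    have hm : MapsTo (fun y : Euc d => (1 - t) • y) Ω Ω := by
      intro y hy
      have := hstar hy ht0.le (by linarith : 0 ≤ 1 - t) (by ring)
      simpa using this
    have := hm.closure (by fun_prop) (frontier_subset_closure hx)
    convert this using 1
    module
  have := hcl _ hmem
  linarith

lemma tangential_zero {d : ℕ} {Ω : Set (Euc d)} {f : Euc d → ℝ}
    (hf : ContDiff ℝ 1 f) (hΩ : Ω = {x | f x < 0})
    (u : Euc d → ℝ) (hbc : ∀ x ∈ frontier Ω, u x = 0) {x : Euc d} (hx : x ∈ frontier Ω)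
    {u' : Euc d →L[ℝ] ℝ} (hu : HasFDerivWithinAt u u' (closure Ω) x)
    {n : Euc d} (hn : fderiv ℝ f x n = 1) {v : Euc d} (hv : fderiv ℝ f x v = 0) : u' v = 0 := by
  have hΩo : IsOpen Ω := by rw [hΩ]; exact isOpen_lt hf.continuous continuous_const
  have hfx : f x = 0 := by
    rw [hΩ] at hx; exact frontier_lt_subset_eq hf.continuous continuous_const hx
  have hd := (hf.differentiable (by norm_num) x).hasFDerivAt
  have key : ∀ δ > 0, |u' v| ≤ δ * (|u' n| + ‖v‖ + δ * ‖n‖) := by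
    intro δ hδ
    have h1 := line_neg (f := f) (v := v + (-δ) • n) hd hfx (by simp [hv, hn, hδ])
    have h2 := line_neg (f := fun y => - f y) (v := v + δ • n) hd.neg (by simpa using hfx)
      (by simp [hv, hn, hδ])
    have h3 : ∀ᶠ y in 𝓝 x, y ∈ frontier Ω → |u' (y - x)| ≤ δ * ‖y - x‖ := by
      have := hu.isLittleO.def hδ
      rw [eventually_nhdsWithin_iff] at this
      filter_upwards [this] with y hy hyf
      have := hy (frontier_subset_closure hyf)
      simpa [hbc y hyf, hbc x hx, abs_sub_comm] using this
    obtain ⟨r, hr, hball⟩ := Metric.eventually_nhds_iff.1 h3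
    have h4 : ∀ᶠ t : ℝ in 𝓝[>] 0, t * (‖v‖ + δ * ‖n‖) < r := by
      refine nhdsWithin_le_nhds ?_
      have : Tendsto (fun t : ℝ => t * (‖v‖ + δ * ‖n‖)) (𝓝 0) (𝓝 (0 * (‖v‖ + δ * ‖n‖))) :=
        (continuous_id.mul continuous_const).tendsto 0
      rw [zero_mul] at this
      exact this.eventually_lt_const hr
    obtain ⟨t, ht1, ht2, ht4, ht0⟩ := (h1.and (h2.and (h4.and self_mem_nhdsWithin))).exists
    have ht0 : 0 < t := ht0
    obtain ⟨s, hs, hfr⟩ : ∃ s ∈ Icc (-δ) δ, x + t • (v + s • n) ∈ frontier Ω := by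
      set g : ℝ → Euc d := fun s => x + t • (v + s • n)
      have hg : Continuous g := by fun_prop
      have hpre : IsPreconnected (g '' Icc (-δ) δ) := isPreconnected_Icc.image _ hg.continuousOn
      have ha : (-δ) ∈ Icc (-δ) δ := ⟨le_rfl, by linarith⟩
      have hb : δ ∈ Icc (-δ) δ := ⟨by linarith, le_rfl⟩
      by_contra hcon
      push Not at hcon
      obtain ⟨y, -, hy1, hy2⟩ := hpre Ω (closure Ω)ᶜ hΩo isClosed_closure.isOpen_compl (by
          rintro _ ⟨s, hs, rfl⟩
          by_cases h : g s ∈ Ω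
          · exact Or.inl h
          · refine Or.inr fun hc => hcon s hs ?_
            rw [hΩo.frontier_eq]
            exact ⟨hc, h⟩)
        ⟨g (-δ), mem_image_of_mem _ ha, by rw [hΩ]; exact ht1⟩
        ⟨g δ, mem_image_of_mem _ hb, fun hc => by
          rw [hΩ] at hc
          have h7 : f (g δ) ≤ 0 := closure_lt_subset_le hf.continuous continuous_const hc
          simp only [g] at h7
          linarith⟩
      exact hy2 (subset_closure hy1)
    have habs : |s| ≤ δ := abs_le.2 hs
    have hnorm : ‖t • (v + s • n)‖ ≤ t * (‖v‖ + δ * ‖n‖) := by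
      rw [norm_smul, Real.norm_eq_abs, abs_of_pos ht0]
      refine mul_le_mul_of_nonneg_left ((norm_add_le _ _).trans ?_) ht0.le
      rw [norm_smul, Real.norm_eq_abs]
      gcongr
    have h5 := hball (y := x + t • (v + s • n)) (by
      rw [dist_eq_norm, add_sub_cancel_left]; exact hnorm.trans_lt ht4) hfr
    rw [add_sub_cancel_left] at h5
    have h6 : |u' (t • (v + s • n))| = t * |u' v + s * u' n| := by
      rw [map_smul, smul_eq_mul, abs_mul, abs_of_pos ht0]
      simp
    rw [h6] at h5
    have h7 : t * |u' v + s * u' n| ≤ t * (δ * (‖v‖ + δ * ‖n‖)) :=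
      h5.trans (by nlinarith)
    have h8 := le_of_mul_le_mul_left h7 ht0
    have h9 : |u' v| ≤ |u' v + s * u' n| + |s * u' n| := by
      have := abs_sub (u' v + s * u' n) (s * u' n)
      simpa using this
    have h10 : |s * u' n| ≤ δ * |u' n| := by
      rw [abs_mul]; gcongr
    nlinarith
  have hlim : Tendsto (fun δ : ℝ => δ * (|u' n| + ‖v‖ + δ * ‖n‖)) (𝓝[>] 0)
      (𝓝 (0 * (|u' n| + ‖v‖ + 0 * ‖n‖))) := by
    refine tendsto_nhdsWithin_of_tendsto_nhds ?_
    have : Continuous (fun δ : ℝ => δ * (|u' n| + ‖v‖ + δ * ‖n‖)) := by fun_prop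
    exact this.tendsto 0
  rw [zero_mul] at hlim
  have : |u' v| ≤ 0 := ge_of_tendsto hlim (by filter_upwards [self_mem_nhdsWithin] with δ hδ using key δ hδ)
  exact abs_eq_zero.1 (le_antisymm this (abs_nonneg _))

lemma exists_V {d : ℕ} {S : Set (Euc d)} (hS : IsClosed S) {f : Euc d → ℝ}
    (hf : ContDiff ℝ 1 f) (hf0 : ∀ x ∈ S, fderiv ℝ f x ≠ 0) :
    ∃ V : Euc d → Euc d, ContDiff ℝ 1 V ∧ ∀ x ∈ S, 0 < fderiv ℝ f x (V x) := by
  have hf' : Continuous (fderiv ℝ f) := hf.continuous_fderiv (by norm_num)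
  obtain ⟨g, hg⟩ := exists_contMDiffMap_forall_mem_convex_of_local_const (n := 1)
    (modelWithCornersSelf ℝ (Euc d)) (F := Euc d)
    (t := fun x => {v | x ∈ S → 0 < fderiv ℝ f x v}) (by
      intro x
      intro a ha b hb s t hs ht hst hx
      have ha := ha hx
      have hb := hb hx
      simp only [map_add, map_smul, smul_eq_mul]
      rcases hs.eq_or_lt with h | h
      · have : t = 1 := by linarith
        subst this; subst h; simpa using hb
      · have := mul_pos h ha
        have := mul_nonneg ht hb.le
        linarith) (by
      intro x
      by_cases hx : x ∈ S
      · obtain ⟨v, hv⟩ : ∃ v, fderiv ℝ f x v ≠ 0 := by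
          by_contra hn
          push Not at hn
          exact hf0 x hx (ContinuousLinearMap.ext hn)
        refine ⟨(fderiv ℝ f x v) • v, ?_⟩
        have h1 : Continuous (fun y => fderiv ℝ f y ((fderiv ℝ f x v) • v)) :=
          hf'.clm_apply continuous_const
        have h2 : 0 < fderiv ℝ f x ((fderiv ℝ f x v) • v) := by
          simpa using hv
        filter_upwards [h1.continuousAt.eventually_const_lt h2] with y hy _ using hy
      · refine ⟨0, ?_⟩
        filter_upwards [hS.isOpen_compl.mem_nhds hx] with y hy hy2 using absurd hy2 hy)
  exact ⟨g, g.contMDiff.contDiff, fun x hx => hg x hx⟩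

def gN (N₀ : ℕ) (s : ℝ) : ℝ :=
  ∑' N : ℕ, if Odd N ∧ N₀ ≤ N then s ^ N / (Nat.factorial N : ℝ) else 0

def GN (N₀ : ℕ) (s : ℝ) : ℝ :=
  ∑' N : ℕ, if Odd N ∧ N₀ ≤ N then s ^ (N + 1) / (Nat.factorial (N + 1) : ℝ) else 0

lemma gN_bound (N₀ : ℕ) {R y : ℝ} (hy : |y| ≤ R) (N : ℕ) :
    ‖(if Odd N ∧ N₀ ≤ N then y ^ N / (Nat.factorial N : ℝ) else 0)‖
      ≤ R ^ N / (Nat.factorial N : ℝ) := by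
  have hR : 0 ≤ R := (abs_nonneg _).trans hy
  split_ifs
  · rw [norm_div, norm_pow, Real.norm_eq_abs, Real.norm_natCast]
    gcongr
  · simp; positivity

lemma gN_summable (N₀ : ℕ) (s : ℝ) :
    Summable (fun N : ℕ => if Odd N ∧ N₀ ≤ N then s ^ N / (Nat.factorial N : ℝ) else 0) :=
  Summable.of_norm_bounded (Real.summable_pow_div_factorial |s|) fun N => gN_bound N₀ le_rfl N

lemma gN_continuous (N₀ : ℕ) : Continuous (gN N₀) := by
  rw [continuous_iff_continuousAt]
  intro s
  have : ContinuousOn (gN N₀) (Metric.ball 0 (|s| + 1)) := by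
    refine continuousOn_tsum (u := fun N => (|s| + 1) ^ N / (Nat.factorial N : ℝ)) ?_
      (Real.summable_pow_div_factorial _) ?_
    · intro N
      split_ifs
      · fun_prop
      · fun_prop
    · intro N y hy
      exact gN_bound N₀ (mem_ball_zero_iff.1 hy).le N
  refine this.continuousAt (Metric.isOpen_ball.mem_nhds ?_)
  simp

lemma GN_hasDerivAt (N₀ : ℕ) (s : ℝ) : HasDerivAt (GN N₀) (gN N₀ s) s := by
  refine hasDerivAt_tsum_of_isPreconnected
    (u := fun N => (|s| + 1) ^ N / (Nat.factorial N : ℝ)) (t := Metric.ball 0 (|s| + 1)) (y₀ := 0)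
    (g := fun N y => if Odd N ∧ N₀ ≤ N then y ^ (N + 1) / (Nat.factorial (N + 1) : ℝ) else 0)
    (g' := fun N y => if Odd N ∧ N₀ ≤ N then y ^ N / (Nat.factorial N : ℝ) else 0)
    (Real.summable_pow_div_factorial _) Metric.isOpen_ball
    (convex_ball _ _).isPreconnected ?_ ?_ ?_ ?_ ?_
  · intro N y _
    by_cases h : Odd N ∧ N₀ ≤ N
    · simp only [h, and_self, if_true]
      have h1 := (hasDerivAt_pow (N + 1) y).div_const (Nat.factorial (N + 1) : ℝ)
      have h2 : ((N + 1 : ℕ) : ℝ) * y ^ (N + 1 - 1) / (Nat.factorial (N + 1) : ℝ)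
          = y ^ N / (Nat.factorial N : ℝ) := by
        rw [Nat.factorial_succ]
        push_cast
        have : (Nat.factorial N : ℝ) ≠ 0 := by positivity
        have : (N : ℝ) + 1 ≠ 0 := by positivity
        field_simp
      rw [← h2]
      exact h1
    · simp only [h, if_false]
      exact hasDerivAt_const _ _
  · intro N y hy
    exact gN_bound N₀ (mem_ball_zero_iff.1 hy).le N
  · simp; positivity
  · simp
  · simp

lemma GN_contDiff (N₀ : ℕ) : ContDiff ℝ 1 (GN N₀) := by
  rw [contDiff_one_iff_deriv]
  refine ⟨fun s => (GN_hasDerivAt N₀ s).differentiableAt, ?_⟩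
  rw [show deriv (GN N₀) = gN N₀ from funext fun s => (GN_hasDerivAt N₀ s).deriv]
  exact gN_continuous N₀

lemma GN_zero (N₀ : ℕ) : GN N₀ 0 = 0 := by
  simp [GN]

lemma GN_le (N₀ : ℕ) (s : ℝ) : (N₀ + 1) * GN N₀ s ≤ s * gN N₀ s := by
  rw [GN, gN, ← tsum_mul_left, ← tsum_mul_left]
  have hle : ∀ N : ℕ, 0 ≤ (N₀ + 1 : ℝ) * (if Odd N ∧ N₀ ≤ N then s ^ (N + 1) / (Nat.factorial (N + 1) : ℝ) else 0) ∧
     (N₀ + 1 : ℝ) * (if Odd N ∧ N₀ ≤ N then s ^ (N + 1) / (Nat.factorial (N + 1) : ℝ) else 0)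
      ≤ s * (if Odd N ∧ N₀ ≤ N then s ^ N / (Nat.factorial N : ℝ) else 0) := by
    intro N
    split_ifs with h
    · have hs : 0 ≤ s ^ (N + 1) := h.1.add_one.pow_nonneg s
      refine ⟨by positivity, ?_⟩
      have h1 : s * (s ^ N / (Nat.factorial N : ℝ)) = (N + 1 : ℝ) * (s ^ (N + 1) / (Nat.factorial (N + 1) : ℝ)) := by
        rw [Nat.factorial_succ]
        push_cast
        have : (Nat.factorial N : ℝ) ≠ 0 := by positivity
        have : (N : ℝ) + 1 ≠ 0 := by positivity
        field_simp
        ring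
      rw [h1]
      have : (N₀ : ℝ) ≤ N := by exact_mod_cast h.2
      have : 0 ≤ s ^ (N + 1) / (Nat.factorial (N + 1) : ℝ) := by positivity
      gcongr
    · simp
  have hs2 := (gN_summable N₀ s).mul_left s
  exact Summable.tsum_le_tsum (fun N => (hle N).2)
    (Summable.of_nonneg_of_le (fun N => (hle N).1) (fun N => (hle N).2) hs2) hs2

lemma gN_pos (N₀ : ℕ) (h : Odd N₀) {s : ℝ} (hs : s ≠ 0) : 0 < s * gN N₀ s := by
  rw [gN, ← tsum_mul_left]
  have hs2 := (gN_summable N₀ s).mul_left s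
  refine hs2.tsum_pos ?_ N₀ ?_
  · intro N
    split_ifs with h
    · have hs : 0 ≤ s ^ (N + 1) := h.1.add_one.pow_nonneg s
      rw [← mul_div_assoc, ← pow_succ']
      positivity
    · simp
  · have : 0 < s ^ (N₀ + 1) := h.add_one.pow_pos hs
    simp only [h, le_refl, and_self, if_true]
    rw [← mul_div_assoc, ← pow_succ']
    positivity

def hN (d N₀ : ℕ) (s : ℝ) : ℝ := d * GN N₀ s - ((d : ℝ) - 2) / 2 * (s * gN N₀ s)

lemma hN_neg (d : ℕ) (hd : 3 ≤ d) (N₀ : ℕ) (hodd : Odd N₀)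
    (hcrit : ((d : ℝ) + 2) / ((d : ℝ) - 2) < (N₀ : ℝ)) {s : ℝ} (hs : s ≠ 0) : hN d N₀ s < 0 := by
  have hd' : (3:ℝ) ≤ d := by exact_mod_cast hd
  rw [div_lt_iff₀ (by linarith)] at hcrit
  have h1 := GN_le N₀ s
  have h2 := gN_pos N₀ hodd hs
  have hN0 : (0:ℝ) < N₀ + 1 := by positivity
  have h3 : (N₀ + 1) * hN d N₀ s < 0 := by
    rw [hN]
    have h4 : (d:ℝ) * ((N₀ + 1) * GN N₀ s) ≤ d * (s * gN N₀ s) :=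
      mul_le_mul_of_nonneg_left h1 (by positivity)
    have h5 : 0 < (((d : ℝ) - 2) / 2 * (N₀ + 1) - d) * (s * gN N₀ s) := mul_pos (by linarith) h2
    linarith
  by_contra hn
  push Not at hn
  have := mul_nonneg hN0.le hn
  linarith

lemma hN_zero (d N₀ : ℕ) : hN d N₀ 0 = 0 := by simp [hN, GN_zero]

lemma hN_continuous (d N₀ : ℕ) : Continuous (hN d N₀) := by
  have h1 := gN_continuous N₀
  have h2 := (GN_contDiff N₀).continuous
  unfold hN
  fun_prop

lemma clm_sum {d : ℕ} (L : Euc d →L[ℝ] ℝ) (x : Euc d) :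
    L x = ∑ i, x i * L (EuclideanSpace.single i (1:ℝ)) := by
  conv_lhs => rw [← (EuclideanSpace.basisFun (Fin d) ℝ).sum_repr x]
  simp

/-- The Pohozaev field. -/
def PF {d : ℕ} (G : ℝ → ℝ) (c : ℝ) (u : Euc d → ℝ) (q : Fin d → Euc d → ℝ) (i : Fin d)
    (y : Euc d) : ℝ :=
  (∑ j, y j * q j y) * q i y - 1 / 2 * (∑ j, q j y * q j y) * y i + G (u y) * y i
    + c * (u y * q i y)

lemma PF_fderiv {d : ℕ} (G : ℝ → ℝ) (g c : ℝ) (u : Euc d → ℝ) (q : Fin d → Euc d → ℝ) (i : Fin d)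
    (x : Euc d) (Q : Fin d → Euc d →L[ℝ] ℝ) (u' : Euc d →L[ℝ] ℝ)
    (hq : ∀ j, HasFDerivAt (q j) (Q j) x) (hu : HasFDerivAt u u' x) (hG : HasDerivAt G g (u x))
    (v : Euc d) :
    fderiv ℝ (PF G c u q i) x v =
      (∑ j, (x j * Q j v + v j * q j x)) * q i x + (∑ j, x j * q j x) * Q i v
      - 1 / 2 * (∑ j, 2 * (q j x * Q j v)) * x i - 1 / 2 * (∑ j, q j x * q j x) * v i
      + g * u' v * x i + G (u x) * v i + c * (u' v * q i x + u x * Q i v) := by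
  have hp : ∀ j, HasFDerivAt (fun y : Euc d => y j) (EuclideanSpace.proj j : Euc d →L[ℝ] ℝ) x :=
    fun j => (EuclideanSpace.proj j : Euc d →L[ℝ] ℝ).hasFDerivAt
  have h1 : HasFDerivAt (fun y : Euc d => ∑ j, y j * q j y) _ x :=
    HasFDerivAt.fun_sum fun j (_ : j ∈ Finset.univ) => (hp j).fun_mul (hq j)
  have h2 : HasFDerivAt (fun y : Euc d => ∑ j, q j y * q j y) _ x :=
    HasFDerivAt.fun_sum fun j (_ : j ∈ Finset.univ) => (hq j).fun_mul (hq j)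
  have h3 : HasFDerivAt (fun y => G (u y)) (g • u') x := hG.comp_hasFDerivAt x hu
  have h4 := (((h1.fun_mul (hq i)).fun_sub ((h2.const_mul (1/2)).fun_mul (hp i))).fun_add
    (h3.fun_mul (hp i))).fun_add ((hu.fun_mul (hq i)).const_mul c)
  have h5 : HasFDerivAt (PF G c u q i) _ x := h4
  rw [h5.fderiv]
  simp
  have e1 : ∑ j, (x j * Q j v + q j x * v j) = ∑ j, (x j * Q j v + v j * q j x) :=
    Finset.sum_congr rfl fun j _ => by ring
  have e2 : ∑ j, (q j x * Q j v + q j x * Q j v) = ∑ j, 2 * (q j x * Q j v) :=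
    Finset.sum_congr rfl fun j _ => by ring
  rw [e1, e2]
  ring

lemma PF_div {d : ℕ} (G : ℝ → ℝ) (g : ℝ) (u : Euc d → ℝ) (q : Fin d → Euc d → ℝ)
    (x : Euc d) (Q : Fin d → Euc d →L[ℝ] ℝ) (u' : Euc d →L[ℝ] ℝ)
    (hq : ∀ j, HasFDerivAt (q j) (Q j) x) (hu : HasFDerivAt u u' x) (hG : HasDerivAt G g (u x))
    (huq : ∀ i, u' (EuclideanSpace.single i (1:ℝ)) = q i x)
    (hsymm : ∀ i j, Q i (EuclideanSpace.single j (1:ℝ)) = Q j (EuclideanSpace.single i (1:ℝ)))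
    (hlap : ∑ i, Q i (EuclideanSpace.single i (1:ℝ)) = - g) :
    ∑ i, fderiv ℝ (PF G (((d:ℝ) - 2)/2) u q i) x (EuclideanSpace.single i (1:ℝ))
      = d * G (u x) - ((d : ℝ) - 2) / 2 * (u x * g) := by
  simp_rw [PF_fderiv G g _ u q _ x Q u' hq hu hG, huq]
  have e1 : ∀ i, ∑ j, (x j * Q j (EuclideanSpace.single i (1:ℝ))
      + (EuclideanSpace.single i (1:ℝ) : Euc d) j * q j x)
      = (∑ j, x j * Q j (EuclideanSpace.single i (1:ℝ))) + q i x := by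
    intro i
    rw [Finset.sum_add_distrib]
    simp
  have e2 : ∀ i, ((EuclideanSpace.single i (1:ℝ) : Euc d) i) = 1 := by intro i; simp
  simp_rw [e1, e2]
  have e3 : ∑ i, (∑ j, x j * Q j (EuclideanSpace.single i (1:ℝ))) * q i x
      = ∑ i, (∑ j, q j x * Q j (EuclideanSpace.single i (1:ℝ))) * x i := by
    simp_rw [Finset.sum_mul]
    rw [Finset.sum_comm]
    refine Finset.sum_congr rfl fun i _ => Finset.sum_congr rfl fun j _ => ?_
    rw [hsymm i j]; ring
  have e4 : ∀ i, ((∑ j, x j * Q j (EuclideanSpace.single i (1:ℝ))) + q i x) * q i x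
      + (∑ j, x j * q j x) * Q i (EuclideanSpace.single i (1:ℝ))
      - 1 / 2 * (∑ j, 2 * (q j x * Q j (EuclideanSpace.single i (1:ℝ)))) * x i
      - 1 / 2 * (∑ j, q j x * q j x) * 1
      + g * q i x * x i + G (u x) * 1
      + ((d:ℝ) - 2)/2 * (q i x * q i x + u x * Q i (EuclideanSpace.single i (1:ℝ)))
      = (∑ j, x j * Q j (EuclideanSpace.single i (1:ℝ))) * q i x
        - (∑ j, q j x * Q j (EuclideanSpace.single i (1:ℝ))) * x i
        + (1 + ((d:ℝ) - 2)/2) * (q i x * q i x)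
        + ((∑ j, x j * q j x) + ((d:ℝ) - 2)/2 * u x) * Q i (EuclideanSpace.single i (1:ℝ))
        + g * (x i * q i x) + (G (u x) - 1 / 2 * (∑ j, q j x * q j x)) := by
    intro i
    rw [← Finset.mul_sum]
    ring
  simp_rw [e4]
  rw [Finset.sum_add_distrib, Finset.sum_add_distrib, Finset.sum_add_distrib,
    Finset.sum_add_distrib, Finset.sum_sub_distrib, e3, ← Finset.mul_sum, ← Finset.mul_sum,
    ← Finset.mul_sum, hlap]
  simp
  ring

lemma PF_bdry {d : ℕ} (G : ℝ → ℝ) (hG : G 0 = 0) (c : ℝ) (u : Euc d → ℝ) (q : Fin d → Euc d → ℝ)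
    (x : Euc d) (hux : u x = 0) (a : Fin d → ℝ) (l : ℝ) (hq : ∀ i, q i x = l * a i)
    (hs : 0 ≤ ∑ i, x i * a i) : 0 ≤ ∑ i, PF G c u q i x * a i := by
  have e1 : ∀ i, PF G c u q i x * a i
      = l ^ 2 * (∑ j, x j * a j) * (a i * a i) - 1 / 2 * l ^ 2 * (∑ j, a j * a j) * (x i * a i) := by
    intro i
    simp only [PF, hux, hG, hq]
    have e2 : ∑ j, x j * (l * a j) = l * ∑ j, x j * a j := by
      rw [Finset.mul_sum]; exact Finset.sum_congr rfl fun j _ => by ring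
    have e3 : ∑ j, l * a j * (l * a j) = l ^ 2 * ∑ j, a j * a j := by
      rw [Finset.mul_sum]; exact Finset.sum_congr rfl fun j _ => by ring
    rw [e2, e3]; ring
  simp_rw [e1]
  rw [Finset.sum_sub_distrib, ← Finset.mul_sum, ← Finset.mul_sum]
  have h2 : 0 ≤ ∑ j, a j * a j := Finset.sum_nonneg fun j _ => mul_self_nonneg _
  have := mul_nonneg (mul_nonneg (sq_nonneg l) hs) h2
  linarith

/-- Derrick–Pohozaev uniqueness: let d ≥ 3, N₀ > (d+2)/(d-2) an odd
integer, Ω star-shaped about 0 with C¹ boundary. Any classical solution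
u ∈ C²(closure Ω) of  -Δu = ∑_{N ≥ N₀, N odd} u^N/N!  in Ω with u = 0 on ∂Ω vanishes
identically on closure Ω. -/
theorem pohozaev_trivial_solution
    (d : ℕ) (hd : 3 ≤ d) (N₀ : ℕ) (hodd : Odd N₀)
    (hcrit : ((d : ℝ) + 2) / ((d : ℝ) - 2) < (N₀ : ℝ))
    (Ω : Set (Euc d)) (hΩo : IsOpen Ω) (hΩb : Bornology.IsBounded Ω)
    (h0 : (0 : Euc d) ∈ Ω) (hstar : StarConvex ℝ (0 : Euc d) Ω)
    (hC1 : HasC1Boundary Ω)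
    (u : Euc d → ℝ) (hu : ContDiffOn ℝ 2 u (closure Ω))
    (heq : ∀ x ∈ Ω,
      -(∑ i : Fin d,
          fderiv ℝ (fun y => fderiv ℝ u y (EuclideanSpace.single i (1:ℝ))) x
            (EuclideanSpace.single i (1:ℝ)))
        = ∑' N : ℕ, if Odd N ∧ N₀ ≤ N then u x ^ N / (Nat.factorial N : ℝ) else 0)
    (hbc : ∀ x ∈ frontier Ω, u x = 0) :
    ∀ x ∈ closure Ω, u x = 0 := by
  obtain ⟨f, hf, hΩ, hf0⟩ := hC1
  have hcomp : IsCompact (closure Ω) := hΩb.isCompact_closure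
  have hUD := uniqueDiff_closure hf hΩ hf0
  have hclos : ∀ x ∈ Ω, closure Ω ∈ 𝓝 x := fun x hx =>
    mem_of_superset (hΩo.mem_nhds hx) subset_closure
  have huΩ : ∀ x ∈ Ω, ContDiffAt ℝ 2 u x := fun x hx => hu.contDiffAt (hclos x hx)
  set q : Fin d → Euc d → ℝ := fun i x =>
    fderivWithin ℝ u (closure Ω) x (EuclideanSpace.single i (1:ℝ)) with hq
  have hqc : ∀ i, ContinuousOn (q i) (closure Ω) := fun i =>
    (hu.continuousOn_fderivWithin hUD (by norm_num)).clm_apply continuousOn_const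
  have hqeq : ∀ i, ∀ x ∈ Ω, q i x = fderiv ℝ u x (EuclideanSpace.single i (1:ℝ)) := by
    intro i x hx
    simp only [hq]
    rw [fderivWithin_of_mem_nhds (hclos x hx)]
  have hqev : ∀ i, ∀ x ∈ Ω, q i =ᶠ[𝓝 x] fun y => fderiv ℝ u y (EuclideanSpace.single i (1:ℝ)) := by
    intro i x hx
    filter_upwards [hΩo.mem_nhds hx] with y hy using hqeq i y hy
  have hfd : ∀ x ∈ Ω, ContDiffAt ℝ 1 (fderiv ℝ u) x := fun x hx =>
    (huΩ x hx).fderiv_right (by norm_num)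
  have hqd : ∀ i, ContDiffOn ℝ 1 (q i) Ω := by
    intro i x hx
    refine ContDiffAt.contDiffWithinAt ?_
    exact ((hfd x hx).clm_apply contDiffAt_const).congr_of_eventuallyEq (hqev i x hx)
  have huc : ContinuousOn u (closure Ω) := hu.continuousOn
  have hu1 : ContDiffOn ℝ 1 u Ω := (hu.mono subset_closure).of_le (by norm_num)
  have hpc : ∀ i : Fin d, ContDiff ℝ 1 (fun y : Euc d => y i) := fun i =>
    (EuclideanSpace.proj i : Euc d →L[ℝ] ℝ).contDiff
  set c : ℝ := ((d:ℝ) - 2) / 2 with hc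
  set F : Fin d → Euc d → ℝ := PF (GN N₀) c u q with hF
  have hFc : ∀ i, ContinuousOn (F i) (closure Ω) := by
    intro i
    have hG : ContinuousOn (fun y => GN N₀ (u y)) (closure Ω) :=
      (GN_contDiff N₀).continuous.comp_continuousOn huc
    have hp : ∀ i : Fin d, ContinuousOn (fun y : Euc d => y i) (closure Ω) := fun i =>
      (hpc i).continuous.continuousOn
    exact ((((continuousOn_finsetSum _ fun j _ => (hp j).mul (hqc j)).mul (hqc i)).sub
      ((continuousOn_const.mul (continuousOn_finsetSum _ fun j _ => (hqc j).mul (hqc j))).mul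
        (hp i))).add (hG.mul (hp i))).add (continuousOn_const.mul (huc.mul (hqc i)))
  have hFd : ∀ i, ContDiffOn ℝ 1 (F i) Ω := by
    intro i
    have hG : ContDiffOn ℝ 1 (fun y => GN N₀ (u y)) Ω :=
      (GN_contDiff N₀).comp_contDiffOn hu1
    have hp : ∀ i : Fin d, ContDiffOn ℝ 1 (fun y : Euc d => y i) Ω := fun i =>
      (hpc i).contDiffOn
    exact ((((ContDiffOn.sum fun j _ => (hp j).mul (hqd j)).mul (hqd i)).sub
      ((contDiffOn_const.mul (ContDiffOn.sum fun j _ => (hqd j).mul (hqd j))).mul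
        (hp i))).add (hG.mul (hp i))).add (contDiffOn_const.mul (hu1.mul (hqd i)))
  have hFdiv : ∀ x ∈ Ω, ∑ i, fderiv ℝ (F i) x (EuclideanSpace.single i (1:ℝ))
      = hN d N₀ (u x) := by
    intro x hx
    have hD := ((hfd x hx).differentiableAt (by norm_num)).hasFDerivAt
    have hQ : ∀ i v, fderiv ℝ (q i) x v
        = fderiv ℝ (fderiv ℝ u) x v (EuclideanSpace.single i (1:ℝ)) := by
      intro i v
      rw [(hqev i x hx).fderiv_eq, (hD.clm_apply (hasFDerivAt_const _ x)).fderiv]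
      simp
    refine PF_div (GN N₀) (gN N₀ (u x)) u q x (fun i => fderiv ℝ (q i) x) (fderiv ℝ u x)
      (fun j => (((hqd j).contDiffAt (hΩo.mem_nhds hx)).differentiableAt
        (by norm_num)).hasFDerivAt)
      ((huΩ x hx).differentiableAt (by norm_num)).hasFDerivAt (GN_hasDerivAt _ _)
      (fun i => (hqeq i x hx).symm) ?_ ?_
    · intro i j
      simp only [hQ]
      exact ((huΩ x hx).isSymmSndFDerivAt (by simp)) _ _
    · have h1 := heq x hx
      rw [gN, ← h1, neg_neg]
      exact Finset.sum_congr rfl fun i _ => by rw [(hqev i x hx).fderiv_eq]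
  have hFb : ∀ x ∈ frontier Ω,
      0 ≤ ∑ i, F i x * fderiv ℝ f x (EuclideanSpace.single i (1:ℝ)) := by
    intro x hx
    obtain ⟨n, hn⟩ : ∃ n, fderiv ℝ f x n = 1 := by
      obtain ⟨v, hv⟩ : ∃ v, fderiv ℝ f x v ≠ 0 := by
        by_contra hn
        push Not at hn
        exact hf0 x hx (ContinuousLinearMap.ext hn)
      exact ⟨(fderiv ℝ f x v)⁻¹ • v, by simp [hv]⟩
    have hux := ((hu x (frontier_subset_closure hx)).differentiableWithinAt
      (by norm_num)).hasFDerivWithinAt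
    refine PF_bdry (GN N₀) (GN_zero N₀) c u q x (hbc x hx) _
      (fderivWithin ℝ u (closure Ω) x n) ?_ ?_
    · intro i
      have h1 := tangential_zero hf hΩ u hbc hx hux hn
        (v := EuclideanSpace.single i (1:ℝ)
          - fderiv ℝ f x (EuclideanSpace.single i (1:ℝ)) • n) (by simp [hn])
      rw [map_sub, map_smul, smul_eq_mul, sub_eq_zero] at h1
      simp only [hq]
      rw [h1, mul_comm]
    · rw [← clm_sum]
      exact star_nonneg hf hΩ hstar hx
  obtain ⟨V, hV, hVpos⟩ := exists_V isClosed_frontier hf hf0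
  have hVi : ∀ i, ContDiff ℝ 1 (fun y => V y i) := fun i => (hpc i).comp hV
  set DV : Euc d → ℝ := fun x =>
    ∑ i, fderiv ℝ (fun y => V y i) x (EuclideanSpace.single i (1:ℝ)) with hDV
  have hDVc : Continuous DV := continuous_finsetSum _ fun i _ =>
    ((hVi i).continuous_fderiv (by norm_num)).clm_apply continuous_const
  have hDVint : IntegrableOn DV Ω :=
    (hDVc.continuousOn.integrableOn_compact hcomp).mono_set subset_closure
  have hhc : ContinuousOn (fun x => hN d N₀ (u x)) (closure Ω) :=
    (hN_continuous d N₀).comp_continuousOn huc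
  have hhint : IntegrableOn (fun x => hN d N₀ (u x)) Ω :=
    (hhc.integrableOn_compact hcomp).mono_set subset_closure
  have key : ∀ δ > 0, 0 ≤ (∫ x in Ω, hN d N₀ (u x)) + δ * ∫ x in Ω, DV x := by
    intro δ hδ
    rw [← integral_const_mul, ← integral_add hhint (hDVint.const_mul δ)]
    refine div_nonneg_aux hΩb hf hΩ (fun i y => F i y + δ * V y i) ?_ ?_ ?_ _ ?_
      (hhint.add (hDVint.const_mul δ))
    · intro i
      exact (hFc i).add (continuousOn_const.mul (hVi i).continuous.continuousOn)
    · intro i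
      exact (hFd i).add (contDiffOn_const.mul (hVi i).contDiffOn)
    · intro x hx
      have h1 := hFb x hx
      have h2 := mul_pos hδ (hVpos x hx)
      rw [clm_sum, Finset.mul_sum] at h2
      have h3 : ∑ i, (F i x + δ * V x i) * fderiv ℝ f x (EuclideanSpace.single i (1:ℝ))
          = (∑ i, F i x * fderiv ℝ f x (EuclideanSpace.single i (1:ℝ)))
            + ∑ i, δ * (V x i * fderiv ℝ f x (EuclideanSpace.single i (1:ℝ))) := by
        rw [← Finset.sum_add_distrib]
        exact Finset.sum_congr rfl fun i _ => by ring
      rw [h3]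
      linarith
    · intro x hx
      rw [← hFdiv x hx, hDV]
      simp only
      rw [Finset.mul_sum, ← Finset.sum_add_distrib]
      refine Finset.sum_congr rfl fun i _ => ?_
      have a1 := (((hFd i).contDiffAt (hΩo.mem_nhds hx)).differentiableAt
        (by norm_num)).hasFDerivAt
      have a2 := ((hVi i).differentiable (by norm_num) x).hasFDerivAt
      rw [(a1.fun_add (a2.const_mul δ)).fderiv]
      simp
  have hInt : 0 ≤ ∫ x in Ω, hN d N₀ (u x) := by
    have hlim : Tendsto (fun δ : ℝ => (∫ x in Ω, hN d N₀ (u x)) + δ * ∫ x in Ω, DV x) (𝓝[>] 0)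
        (𝓝 ((∫ x in Ω, hN d N₀ (u x)) + 0 * ∫ x in Ω, DV x)) := by
      refine tendsto_nhdsWithin_of_tendsto_nhds ?_
      have : Continuous (fun δ : ℝ => (∫ x in Ω, hN d N₀ (u x)) + δ * ∫ x in Ω, DV x) := by
        fun_prop
      exact this.tendsto 0
    rw [zero_mul, add_zero] at hlim
    exact ge_of_tendsto hlim
      (by filter_upwards [self_mem_nhdsWithin] with δ hδ using key δ hδ)
  have hle : ∀ s, hN d N₀ s ≤ 0 := by
    intro s
    rcases eq_or_ne s 0 with rfl | hs
    · exact (hN_zero d N₀).le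
    · exact (hN_neg d hd N₀ hodd hcrit hs).le
  have hzero : ∫ x in Ω, -hN d N₀ (u x) = 0 := by
    rw [integral_neg]
    have : ∫ x in Ω, hN d N₀ (u x) ≤ 0 := integral_nonpos fun x => hle _
    linarith
  have hae : (fun x => -hN d N₀ (u x)) =ᵐ[volume.restrict Ω] 0 :=
    (integral_eq_zero_iff_of_nonneg (fun x => neg_nonneg.2 (hle _)) hhint.neg).1 hzero
  have hEq : EqOn (fun x => -hN d N₀ (u x)) 0 Ω :=
    Measure.eqOn_open_of_ae_eq hae hΩo (hhc.mono subset_closure).neg continuousOn_const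
  intro x hx
  by_cases hxΩ : x ∈ Ω
  · by_contra hne
    have h1 := hN_neg d hd N₀ hodd hcrit hne
    have h2 := hEq hxΩ
    simp only [Pi.zero_apply] at h2
    linarith
  · exact hbc x (by rw [hΩo.frontier_eq]; exact ⟨hx, hxΩ⟩)
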